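/- arXiv:2509.00556 — 3 statements merged into one kernel-verified Lean document; each statement's English description precedes it below -/
import Mathlib

section
/- Two subsets S, T ⊆ 𝔽₂ⁿ are affinely equivalent if and only if there is a bijection g : S → T such that for every subset X ⊆ S, X is an even zero-sum set of S if and only if the image g(X) is an even zero-sum set of T (i.e., the image map g_* restricts to a bijection from E(S) onto E(T)). -/
/-- A subset `X` of `S ⊆ 𝔽₂ⁿ` is an even zero-sum set of `S` if it has even cardinality
and its elements sum to the zero vector. -/
def IsEvenZeroSum {n : ℕ} (S X : Finset (Fin n → ZMod 2)) : Prop :=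
  X ⊆ S ∧ Even X.card ∧ (∑ x ∈ X, x) = 0

/-!
Two families of vectors `v`, `w` in a finite-dimensional space differ by an affine automorphism
exactly when they satisfy the same linear relations among those whose coefficients sum to zero.
Indeed, let `D` be the space of such coefficient vectors `f`. If the maps `f ↦ ∑ f i • v i` and
`f ↦ ∑ f i • w i` on `D` have the same kernel, then their ranges are isomorphic compatibly with the
two maps, and this isomorphism extends to a linear automorphism `L` of the whole space. Evaluating
at `e i - e j ∈ D` shows that `w i - L (v i)` does not depend on `i`.

Over `𝔽₂` a coefficient vector is the indicator of a finite set, and its coefficients sum to zero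
exactly when this set has even cardinality: the relations in question are the even zero-sum sets.
-/

section AffineRelations

variable {K V W ι : Type*} [DivisionRing K] [AddCommGroup V] [Module K V]

theorem exists_linearEquiv_comp_eq_of_ker_eq [AddCommGroup W] [Module K W] {A B : W →ₗ[K] V}
    [FiniteDimensional K A.range] (h : A.ker = B.ker) :
    ∃ L : V ≃ₗ[K] V, L.toLinearMap ∘ₗ A = B := by
  let rangeEquiv : A.range ≃ₗ[K] B.range :=
    A.quotKerEquivRange.symm ≪≫ₗ Submodule.quotEquivOfEq _ _ h ≪≫ₗ B.quotKerEquivRange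
  obtain ⟨L, hL⟩ := Submodule.exists_linearEquiv_restrict_eq rangeEquiv
  refine ⟨L, LinearMap.ext fun x ↦ ?_⟩
  calc
    L (A x) = rangeEquiv ⟨A x, A.mem_range_self x⟩ := (hL ⟨A x, A.mem_range_self x⟩).symm
    _ = B x := by simp [rangeEquiv, LinearMap.quotKerEquivRange_symm_apply_image]

theorem linearCombination_const {R M : Type*} [Semiring R] [AddCommMonoid M] [Module R M]
    (f : ι →₀ R) (c : M) : Finsupp.linearCombination R (fun _ ↦ c) f = f.degree • c := by
  simp [Finsupp.linearCombination_apply, Finsupp.sum, Finsupp.degree_apply, Finset.sum_smul]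

theorem exists_linearEquiv_sub_eq_of_forall_degree_eq_zero [FiniteDimensional K V] {v w : ι → V}
    (h : ∀ f : ι →₀ K, f.degree = 0 →
      (Finsupp.linearCombination K v f = 0 ↔ Finsupp.linearCombination K w f = 0)) :
    ∃ L : V ≃ₗ[K] V, ∀ i j, L (v i - v j) = w i - w j := by
  let D : Submodule K (ι →₀ K) := (Finsupp.linearCombination K fun _ ↦ (1 : K)).ker
  have mem_D {f : ι →₀ K} : f ∈ D ↔ f.degree = 0 := by
    simp [D, linearCombination_const]
  have ker_eq : ((Finsupp.linearCombination K v).domRestrict D).ker =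
      ((Finsupp.linearCombination K w).domRestrict D).ker :=
    Submodule.ext fun f ↦ h f (mem_D.1 f.2)
  obtain ⟨L, hL⟩ := exists_linearEquiv_comp_eq_of_ker_eq (W := D) ker_eq
  refine ⟨L, fun i j ↦ ?_⟩
  have single_sub_single_mem : Finsupp.single i 1 - Finsupp.single j 1 ∈ D := by simp [D]
  simpa using LinearMap.congr_fun hL ⟨_, single_sub_single_mem⟩

theorem exists_linearEquiv_add_eq_iff_forall_degree_eq_zero [FiniteDimensional K V]
    {v w : ι → V} :
    (∃ (L : V ≃ₗ[K] V) (c : V), ∀ i, L (v i) + c = w i) ↔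
      ∀ f : ι →₀ K, f.degree = 0 →
        (Finsupp.linearCombination K v f = 0 ↔ Finsupp.linearCombination K w f = 0) := by
  constructor
  · rintro ⟨L, c, hw⟩ f hf
    have combination_eq : Finsupp.linearCombination K w f =
        L (Finsupp.linearCombination K v f) + f.degree • c := by
      rw [← funext hw, ← linearCombination_const]
      simp only [Finsupp.linearCombination_apply, smul_add, Finsupp.sum_add, map_finsuppSum,
        map_smul]
    rw [combination_eq, hf, zero_smul, add_zero, L.map_eq_zero_iff]
  · intro h
    obtain ⟨L, hL⟩ := exists_linearEquiv_sub_eq_of_forall_degree_eq_zero h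
    rcases isEmpty_or_nonempty ι with _ | ⟨⟨i₀⟩⟩
    · exact ⟨L, 0, isEmptyElim⟩
    · refine ⟨L, w i₀ - L (v i₀), fun i ↦ ?_⟩
      rw [add_sub_left_comm, ← map_sub, hL, add_sub_cancel]

end AffineRelations

section ZModTwo

variable {V ι : Type*} [AddCommGroup V] [Module (ZMod 2) V]

theorem linearCombination_zmod_two {M : Type*} [AddCommMonoid M] [Module (ZMod 2) M]
    (v : ι → M) (f : ι →₀ ZMod 2) :
    Finsupp.linearCombination (ZMod 2) v f = ∑ i ∈ f.support, v i :=
  Finset.sum_congr rfl fun i hi ↦ by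
    rw [Fin.eq_one_of_ne_zero (f i) (Finsupp.mem_support_iff.1 hi)]
    exact one_smul _ _

theorem degree_zmod_two (f : ι →₀ ZMod 2) : f.degree = f.support.card := by
  rw [Finsupp.degree_apply, Finset.cast_card]
  exact Finset.sum_congr rfl fun i hi ↦ Fin.eq_one_of_ne_zero (f i) (Finsupp.mem_support_iff.1 hi)

theorem support_zmod_two_surjective :
    Function.Surjective (Finsupp.support : (ι →₀ ZMod 2) → Finset ι) := fun X ↦
  ⟨Finsupp.indicator X fun _ _ ↦ 1, by classical ext; simp [Finsupp.indicator_apply]⟩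

theorem exists_linearEquiv_add_eq_iff_forall_even_card [FiniteDimensional (ZMod 2) V]
    {v w : ι → V} :
    (∃ (L : V ≃ₗ[ZMod 2] V) (c : V), ∀ i, L (v i) + c = w i) ↔
      ∀ X : Finset ι, Even X.card → (∑ i ∈ X, v i = 0 ↔ ∑ i ∈ X, w i = 0) := by
  simp only [exists_linearEquiv_add_eq_iff_forall_degree_eq_zero,
    support_zmod_two_surjective.forall, linearCombination_zmod_two, degree_zmod_two,
    ZMod.natCast_eq_zero_iff_even]

end ZModTwo

section EvenZeroSum

variable {n : ℕ} {S T : Finset (Fin n → ZMod 2)} {g : (Fin n → ZMod 2) → (Fin n → ZMod 2)}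

theorem isEvenZeroSum_image_iff (hmaps : Set.MapsTo g S T) (hinj : Set.InjOn g S)
    {X : Finset (Fin n → ZMod 2)} (hX : X ⊆ S) :
    IsEvenZeroSum T (X.image g) ↔ Even X.card ∧ ∑ x ∈ X, g x = 0 := by
  have image_subset : X.image g ⊆ T := Finset.image_subset_iff.2 fun x hx ↦ hmaps (hX hx)
  have injOn : Set.InjOn g X := hinj.mono hX
  rw [IsEvenZeroSum, Finset.card_image_of_injOn injOn, Finset.sum_image injOn]
  exact and_iff_right image_subset

theorem forall_isEvenZeroSum_iff_exists_linearEquiv_add_eq (hmaps : Set.MapsTo g S T)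
    (hinj : Set.InjOn g S) :
    (∀ X ⊆ S, (IsEvenZeroSum S X ↔ IsEvenZeroSum T (X.image g))) ↔
      ∃ (L : (Fin n → ZMod 2) ≃ₗ[ZMod 2] (Fin n → ZMod 2)) (c : Fin n → ZMod 2),
        ∀ x ∈ S, L x + c = g x := by
  calc
    _ ↔ ∀ X ⊆ S, Even X.card → (∑ x ∈ X, x = 0 ↔ ∑ x ∈ X, g x = 0) :=
      forall₂_congr fun X hX ↦ by
        rw [isEvenZeroSum_image_iff hmaps hinj hX, IsEvenZeroSum, and_iff_right hX,
          and_congr_right_iff]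
    _ ↔ ∀ Y : Finset S, Even Y.card → (∑ x ∈ Y, (x : Fin n → ZMod 2) = 0 ↔ ∑ x ∈ Y, g x = 0) := by
      constructor
      · intro h Y
        simpa using h (Y.map (.subtype _)) (Finset.map_subtype_subset Y)
      · intro h X hX
        lift X to Finset S using hX
        simpa [Finset.card_image_of_injective _ Subtype.val_injective] using h X
    _ ↔ _ := by
      rw [← exists_linearEquiv_add_eq_iff_forall_even_card]
      simp only [Subtype.forall]

end EvenZeroSum

/-- Two subsets `S, T ⊆ 𝔽₂ⁿ` are affinely equivalent if and only if there is a bijection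
`g : S → T` such that for every `X ⊆ S`, `X` is an even zero-sum set of `S` iff `g(X)` is
an even zero-sum set of `T`. -/
theorem stmt_1 (n : ℕ) (S T : Finset (Fin n → ZMod 2)) :
    (∃ (L : (Fin n → ZMod 2) ≃ₗ[ZMod 2] (Fin n → ZMod 2)) (c : Fin n → ZMod 2),
        S.image (fun x => L x + c) = T) ↔
      ∃ g : (Fin n → ZMod 2) → (Fin n → ZMod 2),
        Set.BijOn g ↑S ↑T ∧
        ∀ X ⊆ S, (IsEvenZeroSum S X ↔ IsEvenZeroSum T (X.image g)) := by
  constructor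
  · rintro ⟨L, c, rfl⟩
    have bijOn : Set.BijOn (fun x ↦ L x + c) S (S.image fun x ↦ L x + c) := by
      rw [Finset.coe_image]
      exact ((add_left_injective c).comp L.injective).injOn.bijOn_image
    exact ⟨_, bijOn,
      (forall_isEvenZeroSum_iff_exists_linearEquiv_add_eq bijOn.mapsTo bijOn.injOn).2
        ⟨L, c, fun _ _ ↦ rfl⟩⟩
  · rintro ⟨g, hg, h⟩
    obtain ⟨L, c, hLc⟩ :=
      (forall_isEvenZeroSum_iff_exists_linearEquiv_add_eq hg.mapsTo hg.injOn).1 h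
    refine ⟨L, c, Finset.coe_injective ?_⟩
    rw [Finset.image_congr hLc, Finset.coe_image, hg.image_eq]
end

section
/- Let S be a finite set, let 𝒱 be a linear subspace of 𝒫(S) under symmetric difference over 𝔽₂ with dim(𝒱) = r, let X₁, …, X_r and Y₁, …, Y_r be bases of 𝒱, and let M be an invertible r × r matrix over 𝔽₂ such that z_X(b) = z_Y(M b) for all b ∈ 𝔽₂^r (M is the change-of-basis matrix). Then v_X(a) = v_Y((Mᵀ)^{-1} a) for all a ∈ 𝔽₂^r. -/
open scoped symmDiff
open Matrix

/-- `zSet X a` is the symmetric difference of the sets `X i` over the indices `i` with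
`a i = 1` (with `zSet X 0 = ∅`). -/
def zSet {α : Type*} [DecidableEq α] {r : ℕ} (X : Fin r → Finset α)
    (a : Fin r → ZMod 2) : Finset α :=
  (Finset.univ.filter (fun i => a i = 1)).fold (· ∆ ·) ∅ X

/-- The Venn region of `S` with respect to `X₁, …, X_r` determined by `a ∈ 𝔽₂^r`. -/
def vennRegion {α : Type*} [DecidableEq α] {r : ℕ} (S : Finset α)
    (X : Fin r → Finset α) (a : Fin r → ZMod 2) : Finset α :=
  S.filter (fun x => ∀ i, x ∈ X i ↔ a i = 1)

/-!
Let `χ_X(x) ∈ 𝔽₂^r` be the vector recording which of the sets `X i` contain `x`, so that `v_X(a)`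
is the set of `x ∈ S` with `χ_X(x) = a`. Since symmetric differences add indicator functions
mod 2, `x` belongs to `z_X(b)` exactly when `χ_X(x) ⬝ b = 1`. Hence `z_X(b) = z_Y(M b)` for all `b`
gives `χ_X(x) ⬝ b = χ_Y(x) ⬝ M b = Mᵀ χ_Y(x) ⬝ b` for all `b`, that is, `χ_X(x) = Mᵀ χ_Y(x)`:
the membership vectors transform contragrediently, and so do the labels of the Venn regions.
-/

section CharTwo

variable {α ι R : Type*} [Semiring R] [CharP R 2]

theorem indicator_symmDiff_eq_add (s t : Set α) (f : α → R) :
    (s ∆ t).indicator f = s.indicator f + t.indicator f := by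
  ext x
  by_cases hs : x ∈ s <;> by_cases ht : x ∈ t <;>
    simp [Set.mem_symmDiff, hs, ht, CharTwo.add_self_eq_zero]

theorem indicator_fold_symmDiff_eq_sum [DecidableEq α] (s : Finset ι) (X : ι → Finset α)
    (f : α → R) :
    ((s.fold (· ∆ ·) ∅ X : Finset α) : Set α).indicator f = ∑ i ∈ s, (X i : Set α).indicator f := by
  induction s using Finset.cons_induction with
  | empty => ext; simp
  | cons i s hi ih =>
    rw [Finset.fold_cons, Finset.coe_symmDiff, indicator_symmDiff_eq_add, ih, Finset.sum_cons]

end CharTwo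

theorem sum_filter_eq_one_eq_dotProduct {ι : Type*} [Fintype ι] (v b : ι → ZMod 2) :
    ∑ i with b i = 1, v i = v ⬝ᵥ b := by
  have ite_eq_mul (c d : ZMod 2) : (if d = 1 then c else 0) = c * d := by
    decide +revert
  simp only [Finset.sum_filter, dotProduct, ite_eq_mul]

theorem mulVec_eq_iff_eq_inv_mulVec {n R : Type*} [Fintype n] [DecidableEq n] [CommRing R]
    {A : Matrix n n R} (hA : IsUnit A) {v w : n → R} : A *ᵥ v = w ↔ v = A⁻¹ *ᵥ w := by
  have hdet : IsUnit A.det := (isUnit_iff_isUnit_det A).mp hA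
  constructor
  · rintro rfl
    rw [mulVec_mulVec, nonsing_inv_mul _ hdet, one_mulVec]
  · rintro rfl
    rw [mulVec_mulVec, mul_nonsing_inv _ hdet, one_mulVec]

/-- The vector `χ_X(x)` over `𝔽₂` whose `i`-th coordinate is `1` if `x ∈ X i` and `0` otherwise;
it is the label of the Venn region of the family `X` that contains `x`. -/
noncomputable def membershipVector {α ι : Type*} (X : ι → Finset α) (x : α) : ι → ZMod 2 :=
  fun i => (X i : Set α).indicator 1 x

section Venn

variable {α : Type*} [DecidableEq α] {r s : ℕ}

theorem indicator_zSet_eq_dotProduct (X : Fin r → Finset α) (b : Fin r → ZMod 2) (x : α) :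
    (zSet X b : Set α).indicator 1 x = membershipVector X x ⬝ᵥ b := by
  rw [zSet, indicator_fold_symmDiff_eq_sum, Finset.sum_apply,
    ← sum_filter_eq_one_eq_dotProduct]
  rfl

theorem mem_vennRegion_iff {S : Finset α} {X : Fin r → Finset α} {a : Fin r → ZMod 2} {x : α} :
    x ∈ vennRegion S X a ↔ x ∈ S ∧ membershipVector X x = a := by
  have coord_eq_iff (i : Fin r) : membershipVector X x i = a i ↔ (x ∈ X i ↔ a i = 1) := by
    have zero_eq_iff (c : ZMod 2) : 0 = c ↔ c ≠ 1 := by decide +revert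
    by_cases hx : x ∈ X i <;> simp [membershipVector, hx, zero_eq_iff, eq_comm]
  simp only [vennRegion, Finset.mem_filter, funext_iff, coord_eq_iff]

theorem membershipVector_eq_transpose_mulVec {X : Fin r → Finset α} {Y : Fin s → Finset α}
    {M : Matrix (Fin s) (Fin r) (ZMod 2)} (hchange : ∀ b, zSet X b = zSet Y (M *ᵥ b)) (x : α) :
    membershipVector X x = Mᵀ *ᵥ membershipVector Y x := by
  refine dotProduct_eq _ _ fun b => ?_
  calc membershipVector X x ⬝ᵥ b
      = (zSet Y (M *ᵥ b) : Set α).indicator 1 x := by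
        rw [← indicator_zSet_eq_dotProduct, hchange]
    _ = membershipVector Y x ⬝ᵥ M *ᵥ b := indicator_zSet_eq_dotProduct Y _ x
    _ = Mᵀ *ᵥ membershipVector Y x ⬝ᵥ b := by rw [dotProduct_mulVec, mulVec_transpose]

theorem stmt_8_general (S : Finset α) (X Y : Fin r → Finset α)
    (M : Matrix (Fin r) (Fin r) (ZMod 2)) (hM : IsUnit M)
    (hchange : ∀ b, zSet X b = zSet Y (M *ᵥ b)) (a : Fin r → ZMod 2) :
    vennRegion S X a = vennRegion S Y (Mᵀ⁻¹ *ᵥ a) := by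
  ext x
  rw [mem_vennRegion_iff, mem_vennRegion_iff, membershipVector_eq_transpose_mulVec hchange,
    mulVec_eq_iff_eq_inv_mulVec (M.isUnit_transpose.mpr hM)]

end Venn

/-- Let `S` be a finite set, `𝒱` a linear subspace of `𝒫(S)` under symmetric difference
over `𝔽₂` with bases `X₁, …, X_r` and `Y₁, …, Y_r`, and `M` an invertible `r × r` matrix
over `𝔽₂` with `z_X(b) = z_Y(M b)` for all `b` (the change-of-basis matrix).  Then the
Venn coordinates transform by `(Mᵀ)⁻¹`: `v_X(a) = v_Y((Mᵀ)⁻¹ a)` for all `a ∈ 𝔽₂^r`. -/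
theorem stmt_8 {α : Type*} [DecidableEq α] (S : Finset α)
    (V : Finset (Finset α)) (r : ℕ) (X Y : Fin r → Finset α)
    (hVS : ∀ A ∈ V, A ⊆ S) (hV0 : (∅ : Finset α) ∈ V)
    (hVcl : ∀ A ∈ V, ∀ B ∈ V, A ∆ B ∈ V)
    (hXbasis : Set.range (zSet X) = ↑V ∧ Function.Injective (zSet X))
    (hYbasis : Set.range (zSet Y) = ↑V ∧ Function.Injective (zSet Y))
    (M : Matrix (Fin r) (Fin r) (ZMod 2)) (hM : IsUnit M)
    (hchange : ∀ b : Fin r → ZMod 2, zSet X b = zSet Y (M.mulVec b)) :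
    ∀ a : Fin r → ZMod 2, vennRegion S X a = vennRegion S Y ((Mᵀ)⁻¹.mulVec a) :=
  stmt_8_general S X Y M hM hchange
end

section
/- Let S = B ⊔ D ⊆ 𝔽₂ⁿ be finite, where B is an affine basis for S and D = S \ B, and let φ : 𝒫(D) → E(S) be the sumset map induced by B. Then φ is a bijection from 𝒫(D) onto E(S), and φ is linear: φ(D₁ △ D₂) = φ(D₁) △ φ(D₂) for all D₁, D₂ ⊆ D. -/
open scoped symmDiff

/-- Given, for each dependent point `w`, the even zero-sum set `X_w = {w} ∪ B_w`
(encoded by the function `ξ`), the sumset map sends a set `D'` of dependent points to the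
symmetric difference `△_{w ∈ D'} X_w` (with `∅ ↦ ∅`). -/
def sumsetMap {n : ℕ} (ξ : (Fin n → ZMod 2) → Finset (Fin n → ZMod 2))
    (D' : Finset (Fin n → ZMod 2)) : Finset (Fin n → ZMod 2) :=
  D'.fold (· ∆ ·) ∅ ξ

/-!
The sum of a function with values in a group of exponent two is additive for `∆`. Applied to the
constant `1` and to the identity, this says that the even zero-sum sets of `S` are closed under `∆`;
applied to `ξ`, with values in the Boolean ring of finsets, it is the linearity of `φ`.

As `X_w ∩ D = {w}`, one recovers `D' ⊆ D` from its image by `φ(D') ∩ D = D'`, so `φ` is injective.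
For an even zero-sum set `Z`, the set `Z ∆ φ(Z ∩ D)` is again an even zero-sum set, and it lies in
`B`; its indicator function is an affine dependence of `B`, so it is empty and `Z = φ(Z ∩ D)`.
-/

section SymmDiffFold

variable {ι α : Type*}

theorem sum_symmDiff_of_add_self_eq_zero {M : Type*} [DecidableEq ι] [AddCommMonoid M]
    (hM : ∀ m : M, m + m = 0) (f : ι → M) (s t : Finset ι) :
    ∑ i ∈ s ∆ t, f i = ∑ i ∈ s, f i + ∑ i ∈ t, f i := by
  calc ∑ i ∈ s ∆ t, f i = ∑ i ∈ s \ t, f i + ∑ i ∈ t \ s, f i :=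
        Finset.sum_union disjoint_sdiff_sdiff
    _ = (∑ i ∈ s ∩ t, f i + ∑ i ∈ s ∩ t, f i) + (∑ i ∈ s \ t, f i + ∑ i ∈ t \ s, f i) := by
        rw [hM, zero_add]
    _ = (∑ i ∈ s ∩ t, f i + ∑ i ∈ s \ t, f i) + (∑ i ∈ t ∩ s, f i + ∑ i ∈ t \ s, f i) := by
        rw [Finset.inter_comm t s, add_add_add_comm]
    _ = ∑ i ∈ s, f i + ∑ i ∈ t, f i := by
        rw [Finset.sum_inter_add_sum_sdiff, Finset.sum_inter_add_sum_sdiff]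

theorem even_card_symmDiff [DecidableEq ι] {s t : Finset ι} (hs : Even s.card)
    (ht : Even t.card) : Even (s ∆ t).card := by
  rw [← ZMod.natCast_eq_zero_iff_even, Finset.cast_card] at *
  rw [sum_symmDiff_of_add_self_eq_zero CharTwo.add_self_eq_zero, hs, ht, add_zero]

/-- The iterated symmetric difference `△_{i ∈ s} f i`, equal to `⊥` for `s = ∅`. It is the sumset
map when `f i` is the even zero-sum set attached to a dependent point `i`. -/
def symmDiffFold [GeneralizedBooleanAlgebra α] (f : ι → α) (s : Finset ι) : α :=
  s.fold (· ∆ ·) ⊥ f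

theorem symmDiffFold_insert [DecidableEq ι] [GeneralizedBooleanAlgebra α] (f : ι → α) {i : ι}
    {s : Finset ι} (hi : i ∉ s) : symmDiffFold f (insert i s) = f i ∆ symmDiffFold f s :=
  Finset.fold_insert hi

theorem toBoolRing_symmDiffFold [GeneralizedBooleanAlgebra α] (f : ι → α) (s : Finset ι) :
    toBoolRing (symmDiffFold f s) = ∑ i ∈ s, toBoolRing (f i) :=
  rfl

theorem symmDiffFold_symmDiff [DecidableEq ι] [GeneralizedBooleanAlgebra α] (f : ι → α)
    (s t : Finset ι) : symmDiffFold f (s ∆ t) = symmDiffFold f s ∆ symmDiffFold f t := by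
  have add_self (a : AsBoolRing α) : a + a = 0 := symmDiff_self (ofBoolRing a)
  have toBoolRing_symmDiff (a b : α) : toBoolRing (a ∆ b) = toBoolRing a + toBoolRing b := rfl
  apply toBoolRing.injective
  rw [toBoolRing_symmDiff, toBoolRing_symmDiffFold, toBoolRing_symmDiffFold,
    toBoolRing_symmDiffFold, sum_symmDiff_of_add_self_eq_zero add_self]

theorem mem_symmDiffFold_iff_odd_card [DecidableEq α] (f : ι → Finset α) (s : Finset ι) (x : α) :
    x ∈ symmDiffFold f s ↔ Odd (s.filter (x ∈ f ·)).card := by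
  classical
  induction s using Finset.induction_on with
  | empty => simp [symmDiffFold]
  | insert i s hi ih =>
    rw [symmDiffFold_insert f hi, Finset.mem_symmDiff, ih, Finset.filter_insert]
    by_cases hx : x ∈ f i <;> simp [hx, hi, Nat.odd_add_one]

theorem mem_symmDiffFold_iff_mem [DecidableEq α] {f : α → Finset α} {s : Finset α} {x : α}
    (hf : ∀ w ∈ s, x ∈ f w ↔ x = w) : x ∈ symmDiffFold f s ↔ x ∈ s := by
  rw [mem_symmDiffFold_iff_odd_card, Finset.filter_congr hf, Finset.filter_eq]
  split_ifs with hx <;> simp [hx]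

end SymmDiffFold

theorem eq_empty_of_affineIndependent_of_sum_eq_zero {k V : Type*} [Ring k] [Nontrivial k]
    [AddCommGroup V] [Module k V] {B : Set V} (hB : AffineIndependent k ((↑) : B → V))
    {s : Finset V} (hsB : ↑s ⊆ B) (hcard : (s.card : k) = 0) (hsum : ∑ x ∈ s, x = 0) : s = ∅ := by
  classical
  rw [affineIndependent_iff] at hB
  have weights_sum : ∑ _x ∈ s.subtype (· ∈ B), (1 : k) = 0 := by
    rw [Finset.sum_subtype_of_mem (fun _ => (1 : k)) fun x hx => hsB hx, ← Finset.cast_card, hcard]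
  have combination : ∑ x ∈ s.subtype (· ∈ B), (1 : k) • (x : V) = 0 := by
    rw [Finset.sum_subtype_of_mem (fun x => (1 : k) • x) fun x hx => hsB hx]
    simpa only [one_smul] using hsum
  refine Finset.eq_empty_of_forall_notMem fun x hx => one_ne_zero (α := k) ?_
  exact hB _ (fun _ => 1) weights_sum combination ⟨x, hsB hx⟩ (Finset.mem_subtype.2 hx)

section EvenZeroSum

variable {V : Type*}

/-- The collection `E(S)` of even zero-sum sets of `S`. These are finsets, while `S` itself may be
infinite. -/
def evenZeroSumSets [AddCommMonoid V] (S : Set V) : Set (Finset V) :=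
  {X | ↑X ⊆ S ∧ Even X.card ∧ ∑ x ∈ X, x = 0}

/-- `X` is a set `X_w = {w} ∪ B_w` with `B_w ⊆ B` of odd cardinality and sum `w`, where `w ∉ B` is
intended. The set `B_w` is encoded as `X.erase w`. -/
def IsFundamentalZeroSum [AddCommMonoid V] [DecidableEq V] (B : Set V) (w : V) (X : Finset V) :
    Prop :=
  w ∈ X ∧ ↑X ⊆ insert w B ∧ Odd (X.erase w).card ∧ ∑ x ∈ X.erase w, x = w

theorem isFundamentalZeroSum_coe [AddCommMonoid V] [DecidableEq V] {B X : Finset V} {w : V} :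
    IsFundamentalZeroSum (B : Set V) w X ↔
      w ∈ X ∧ X ⊆ insert w B ∧ Odd (X.erase w).card ∧ ∑ x ∈ X.erase w, x = w := by
  rw [IsFundamentalZeroSum, ← Finset.coe_insert, Finset.coe_subset]

theorem evenZeroSumSets_mono [AddCommMonoid V] {S T : Set V} (h : S ⊆ T) :
    evenZeroSumSets S ⊆ evenZeroSumSets T :=
  fun _ hX => ⟨hX.1.trans h, hX.2⟩

theorem IsFundamentalZeroSum.mem_iff_eq [AddCommMonoid V] [DecidableEq V] {B : Set V} {w x : V}
    {X : Finset V} (hX : IsFundamentalZeroSum B w X) (hx : x ∉ B) : x ∈ X ↔ x = w :=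
  ⟨fun hxX => (hX.2.1 hxX).resolve_right hx, fun hxw => hxw ▸ hX.1⟩

variable [AddCommGroup V] [Module (ZMod 2) V] {S B D : Set V}

theorem IsFundamentalZeroSum.mem_evenZeroSumSets [DecidableEq V] {w : V} {X : Finset V}
    (hX : IsFundamentalZeroSum B w X) : X ∈ evenZeroSumSets (insert w B) := by
  obtain ⟨hw, hsub, hodd, hsum⟩ := hX
  refine ⟨hsub, ?_, ?_⟩
  · rw [← Finset.card_erase_add_one hw]
    exact hodd.add_one
  · rw [← Finset.add_sum_erase _ _ hw, hsum, ZModModule.add_self]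

theorem symmDiff_mem_evenZeroSumSets [DecidableEq V] {X Y : Finset V}
    (hX : X ∈ evenZeroSumSets S) (hY : Y ∈ evenZeroSumSets S) : X ∆ Y ∈ evenZeroSumSets S := by
  obtain ⟨hXS, hXeven, hXsum⟩ := hX
  obtain ⟨hYS, hYeven, hYsum⟩ := hY
  refine ⟨?_, even_card_symmDiff hXeven hYeven, ?_⟩
  · rw [Finset.coe_symmDiff]
    exact Set.symmDiff_subset_union.trans (Set.union_subset hXS hYS)
  · rw [sum_symmDiff_of_add_self_eq_zero ZModModule.add_self, hXsum, hYsum, add_zero]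

theorem symmDiffFold_mem_evenZeroSumSets [DecidableEq V] {ι : Type*} {f : ι → Finset V}
    {s : Finset ι} (hf : ∀ i ∈ s, f i ∈ evenZeroSumSets S) :
    symmDiffFold f s ∈ evenZeroSumSets S := by
  classical
  induction s using Finset.induction_on with
  | empty => simp [symmDiffFold, evenZeroSumSets]
  | insert i s hi ih =>
    rw [Finset.forall_mem_insert] at hf
    rw [symmDiffFold_insert f hi]
    exact symmDiff_mem_evenZeroSumSets hf.1 (ih hf.2)

theorem eq_of_mem_evenZeroSumSets_of_forall_notMem
    (hB : AffineIndependent (ZMod 2) ((↑) : B → V)) {X Y : Finset V}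
    (hX : X ∈ evenZeroSumSets S) (hY : Y ∈ evenZeroSumSets S)
    (hXY : ∀ x ∈ S, x ∉ B → (x ∈ X ↔ x ∈ Y)) : X = Y := by
  classical
  obtain ⟨hsub, heven, hsum⟩ := symmDiff_mem_evenZeroSumSets hX hY
  have hsubB : ↑(X ∆ Y) ⊆ B := by
    intro x hx
    by_contra hxB
    have hiff := hXY x (hsub hx) hxB
    rw [Finset.mem_coe, Finset.mem_symmDiff] at hx
    tauto
  exact symmDiff_eq_bot.1 <|
    eq_empty_of_affineIndependent_of_sum_eq_zero hB hsubB
      (ZMod.natCast_eq_zero_iff_even.2 heven) hsum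

theorem stmt_14_general [DecidableEq V] (hdisj : Disjoint B D)
    (hB : AffineIndependent (ZMod 2) ((↑) : B → V)) {ξ : V → Finset V}
    (hξ : ∀ w ∈ D, IsFundamentalZeroSum B w (ξ w)) :
    Set.BijOn (symmDiffFold ξ) {D' | ↑D' ⊆ D} (evenZeroSumSets (B ∪ D)) ∧
    ∀ D₁ D₂ : Finset V, symmDiffFold ξ (D₁ ∆ D₂) = symmDiffFold ξ D₁ ∆ symmDiffFold ξ D₂ := by
  classical
  have mapsTo {D' : Finset V} (hD' : ↑D' ⊆ D) : symmDiffFold ξ D' ∈ evenZeroSumSets (B ∪ D) :=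
    symmDiffFold_mem_evenZeroSumSets fun w hw =>
      evenZeroSumSets_mono (Set.insert_subset (.inr (hD' hw)) Set.subset_union_left)
        (hξ w (hD' hw)).mem_evenZeroSumSets
  have mem_iff {D' : Finset V} (hD' : ↑D' ⊆ D) {x : V} (hx : x ∉ B) :
      x ∈ symmDiffFold ξ D' ↔ x ∈ D' :=
    mem_symmDiffFold_iff_mem fun w hw => (hξ w (hD' hw)).mem_iff_eq hx
  refine ⟨⟨fun D' hD' => mapsTo hD', fun D₁ h₁ D₂ h₂ h => ?_, fun Z hZ => ?_⟩,
    symmDiffFold_symmDiff ξ⟩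
  · ext x
    by_cases hx : x ∈ B
    · have hxD : x ∉ D := hdisj.notMem_of_mem_left hx
      exact iff_of_false (fun hx₁ => hxD (h₁ hx₁)) fun hx₂ => hxD (h₂ hx₂)
    · rw [← mem_iff h₁ hx, h, mem_iff h₂ hx]
  · have hZD : ↑(Z.filter (· ∈ D)) ⊆ D := fun x hx => (Finset.mem_filter.1 hx).2
    refine ⟨Z.filter (· ∈ D), hZD, ?_⟩
    refine eq_of_mem_evenZeroSumSets_of_forall_notMem hB (mapsTo hZD) hZ fun x hxS hxB => ?_
    rw [mem_iff hZD hxB, Finset.mem_filter, and_iff_left (hxS.resolve_left hxB)]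

end EvenZeroSum

/-- Let `S = B ⊔ D ⊆ 𝔽₂ⁿ` be finite, where `B` is an affine basis for `S` and
`D = S \ B`, and let `φ = sumsetMap ξ` be the sumset map induced by `B`, where for each
`w ∈ D` the set `ξ w = X_w` consists of `w` together with the unique odd-cardinality
subset of `B` summing to `w`.  Then `φ` is a bijection from `𝒫(D)` onto `E(S)`, and `φ`
is linear: `φ(D₁ ∆ D₂) = φ(D₁) ∆ φ(D₂)` for all `D₁, D₂ ⊆ D`. -/
theorem stmt_14 (n : ℕ) (S B D : Finset (Fin n → ZMod 2))
    (hSBD : S = B ∪ D) (hdisj : Disjoint B D)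
    (hind : AffineIndependent (ZMod 2)
      (fun x : (B : Set (Fin n → ZMod 2)) => (x : Fin n → ZMod 2)))
    (hspan : ∀ x ∈ S, x ∈ affineSpan (ZMod 2) (B : Set (Fin n → ZMod 2)))
    (ξ : (Fin n → ZMod 2) → Finset (Fin n → ZMod 2))
    (hξ : ∀ w ∈ D, w ∈ ξ w ∧ ξ w ⊆ insert w B ∧
      Odd ((ξ w).erase w).card ∧ (∑ x ∈ (ξ w).erase w, x) = w) :
    (∀ D' ⊆ D, IsEvenZeroSum S (sumsetMap ξ D')) ∧
    (∀ D₁ ⊆ D, ∀ D₂ ⊆ D, sumsetMap ξ D₁ = sumsetMap ξ D₂ → D₁ = D₂) ∧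
    (∀ Z : Finset (Fin n → ZMod 2), IsEvenZeroSum S Z →
      ∃ D' ⊆ D, sumsetMap ξ D' = Z) ∧
    (∀ D₁ ⊆ D, ∀ D₂ ⊆ D,
      sumsetMap ξ (D₁ ∆ D₂) = sumsetMap ξ D₁ ∆ sumsetMap ξ D₂) := by
  have hφ := stmt_14_general (Finset.disjoint_coe.2 hdisj) hind fun w hw =>
    isFundamentalZeroSum_coe.2 (hξ w hw)
  rw [← Finset.coe_union, ← hSBD] at hφ
  obtain ⟨⟨mapsTo, injOn, surjOn⟩, linear⟩ := hφ
  -- `X ∈ evenZeroSumSets ↑S` and `symmDiffFold ξ D'` unfold to `IsEvenZeroSum S X` and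
  -- `sumsetMap ξ D'`.
  exact ⟨fun _ h => mapsTo h, fun _ h₁ _ h₂ h => injOn h₁ h₂ h, fun _ hZ => surjOn hZ,
    fun D₁ _ D₂ _ => linear D₁ D₂⟩
end
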